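/- Let X^n be a random vector in ℝ^n with finite second moments whose probability density f^(n) is (c1,c2)-regular, and let g^(n) be the Gaussian density on ℝ^n with the same mean vector and covariance matrix as f^(n). Then D(f^(n) ‖ g^(n)) ≤ (c1·√(E[‖X^n‖²]) + c2) · 2·√(E[‖X^n‖²]). -/

import Mathlib

open MeasureTheory Real ProbabilityTheory
open scoped BigOperators ENNReal

noncomputable section

/-- A probability density on `ℝⁿ` (Euclidean space): nonnegative, integrable, integrating to one. -/
def IsDensity {n : ℕ} (f : EuclideanSpace ℝ (Fin n) → ℝ) : Prop :=
  (∀ x, 0 ≤ f x) ∧ Integrable f ∧ (∫ x, f x) = 1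

/-- `(c₁, c₂)`-regularity of a density (Polyanskiy–Wu): everywhere positive, differentiable,
and `‖∇ log f(x)‖ ≤ c₁‖x‖ + c₂`. -/
def IsRegularDensity {n : ℕ} (c₁ c₂ : ℝ) (f : EuclideanSpace ℝ (Fin n) → ℝ) : Prop :=
  (∀ x, 0 < f x) ∧ Differentiable ℝ f ∧
    ∀ x : EuclideanSpace ℝ (Fin n),
      ‖gradient (fun y => Real.log (f y)) x‖ ≤ c₁ * ‖x‖ + c₂

/-- Kullback–Leibler divergence between two densities (natural logarithm). -/
def klDiv' {n : ℕ} (f g : EuclideanSpace ℝ (Fin n) → ℝ) : ℝ :=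
  ∫ x, f x * Real.log (f x / g x)

/-- Mean vector of a density. -/
def meanVec {n : ℕ} (f : EuclideanSpace ℝ (Fin n) → ℝ) : Fin n → ℝ :=
  fun i => ∫ x, f x * x i

/-- Covariance matrix of a density. -/
def covMat {n : ℕ} (f : EuclideanSpace ℝ (Fin n) → ℝ) : Matrix (Fin n) (Fin n) ℝ :=
  Matrix.of fun i j => ∫ x, f x * (x i - meanVec f i) * (x j - meanVec f j)

/-- The Gaussian density on `ℝⁿ` with mean vector `m` and covariance matrix `R`. -/
def gaussDensity {n : ℕ} (m : Fin n → ℝ) (R : Matrix (Fin n) (Fin n) ℝ)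
    (x : EuclideanSpace ℝ (Fin n)) : ℝ :=
  (2 * π) ^ (-(n : ℝ) / 2) * R.det ^ (-(1 : ℝ) / 2) *
    Real.exp (-(1 / 2) * ∑ i, ∑ j, (x i - m i) * R⁻¹ i j * (x j - m j))

/-- `D(f) = D(f ‖ g)` where `g` is the Gaussian density with the same mean vector and
covariance matrix as `f`. -/
def KLtoGauss {n : ℕ} (f : EuclideanSpace ℝ (Fin n) → ℝ) : ℝ :=
  klDiv' f (gaussDensity (meanVec f) (covMat f))

/-- The vector `(X_k, X_{k+1}, …, X_{k+n-1})` of a process, as a point of Euclidean space. -/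
def pathVec {Ω : Type*} (X : ℕ → Ω → ℝ) (k n : ℕ) (ω : Ω) : EuclideanSpace ℝ (Fin n) :=
  (WithLp.equiv 2 (Fin n → ℝ)).symm fun i : Fin n => X (k + i) ω

/-- The centered isotropic Gaussian density on `ℝⁿ` with covariance `v • Iₙ`. -/
def isoGaussDensity (n : ℕ) (v : ℝ) (x : EuclideanSpace ℝ (Fin n)) : ℝ :=
  (2 * π * v) ^ (-(n : ℝ) / 2) * Real.exp (-‖x‖ ^ 2 / (2 * v))

/-- Log-concavity of a nonnegative function. -/
def LogConcaveFn {n : ℕ} (f : EuclideanSpace ℝ (Fin n) → ℝ) : Prop :=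
  ∀ x y : EuclideanSpace ℝ (Fin n), ∀ t : ℝ, 0 ≤ t → t ≤ 1 →
    f x ^ t * f y ^ (1 - t) ≤ f (t • x + (1 - t) • y)

/-- A zero-mean Gaussian random vector with covariance matrix `R`: every linear functional of it
is a centered real Gaussian with the corresponding variance. -/
def IsCenteredGaussianVec {Ω : Type*} [MeasurableSpace Ω] {n : ℕ} (P : Measure Ω)
    (W : Ω → EuclideanSpace ℝ (Fin n)) (R : Matrix (Fin n) (Fin n) ℝ) : Prop :=
  ∀ a : Fin n → ℝ, Measure.map (fun ω => ∑ i, a i * W ω i) P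
    = gaussianReal 0 (Real.toNNReal (∑ i, ∑ j, a i * R i j * a j))

/-- Hadamard (element-wise) product of two Euclidean vectors. -/
def hadamard {n : ℕ} (u v : EuclideanSpace ℝ (Fin n)) : EuclideanSpace ℝ (Fin n) :=
  (WithLp.equiv 2 (Fin n → ℝ)).symm fun i => u i * v i

end

open MeasureTheory Real ProbabilityTheory
open scoped BigOperators ENNReal

section helpers

/-- Weighted first moment is at most the root of the weighted second moment. -/
lemma weighted_mean_le_sqrt {α : Type*} [MeasurableSpace α] (μ : Measure α) (w u : α → ℝ)
    (hw : ∀ x, 0 ≤ w x) (h0 : Integrable w μ) (h0' : ∫ x, w x ∂μ = 1)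
    (h1 : Integrable (fun x => w x * u x) μ) (h2 : Integrable (fun x => w x * u x ^ 2) μ) :
    ∫ x, w x * u x ∂μ ≤ √(∫ x, w x * u x ^ 2 ∂μ) := by
  set a := ∫ x, w x * u x ∂μ with ha
  have h : 0 ≤ ∫ x, (w x * u x ^ 2 - 2 * a * (w x * u x) + a ^ 2 * w x) ∂μ := by
    apply integral_nonneg
    intro x
    have := mul_nonneg (hw x) (sq_nonneg (u x - a))
    simp only [Pi.zero_apply]
    nlinarith
  have h3 : Integrable (fun x => w x * u x ^ 2 - 2 * a * (w x * u x)) μ := h2.sub (h1.const_mul _)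
  rw [integral_add h3 (h0.const_mul _),
    integral_sub h2 (h1.const_mul _), integral_const_mul, integral_const_mul, h0', ← ha] at h
  apply Real.le_sqrt_of_sq_le
  nlinarith

lemma weighted_integrable_of_sq {α : Type*} [MeasurableSpace α] (μ : Measure α) (w u : α → ℝ)
    (hw : ∀ x, 0 ≤ w x) (h0 : Integrable w μ)
    (h1 : AEStronglyMeasurable u μ) (h2 : Integrable (fun x => w x * u x ^ 2) μ) :
    Integrable (fun x => w x * u x) μ := by
  refine (h0.add h2).mono' (h0.aestronglyMeasurable.mul h1) (Filter.Eventually.of_forall fun x => ?_)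
  simp only [Pi.add_apply, norm_mul, Real.norm_eq_abs, abs_of_nonneg (hw x)]
  have : |u x| ≤ 1 + u x ^ 2 := by
    rw [← sq_abs]; nlinarith [sq_nonneg (|u x| - 1), abs_nonneg (u x)]
  nlinarith [hw x]

/-- Standard Gaussian density on `Fin n → ℝ`. -/
noncomputable def stdPhi {n : ℕ} (z : Fin n → ℝ) : ℝ := ∏ i, gaussianPDFReal 0 1 (z i)

lemma pdf_int0 : Integrable (fun t : ℝ => gaussianPDFReal 0 1 t) := integrable_gaussianPDFReal 0 1

lemma pdf_integrable_iff (f : ℝ → ℝ) (h : Integrable f (gaussianReal 0 1)) :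
    Integrable (fun t => gaussianPDFReal 0 1 t * f t) := by
  rw [gaussianReal_of_var_ne_zero _ one_ne_zero,
    integrable_withDensity_iff_integrable_smul' (measurable_gaussianPDF _ _)
      (ae_of_all _ fun _ ↦ gaussianPDF_lt_top)] at h
  simpa [toReal_gaussianPDF] using h

lemma pdf_int1 : Integrable (fun t : ℝ => gaussianPDFReal 0 1 t * t) :=
  pdf_integrable_iff (fun t => t) ((memLp_id_gaussianReal 1).integrable (by simp))

lemma pdf_int2 : Integrable (fun t : ℝ => gaussianPDFReal 0 1 t * t ^ 2) :=
  pdf_integrable_iff (fun t => t ^ 2) ((memLp_id_gaussianReal 2).integrable_sq)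

lemma pdf_integral0 : ∫ t : ℝ, gaussianPDFReal 0 1 t = 1 :=
  integral_gaussianPDFReal_eq_one 0 one_ne_zero

lemma pdf_integral1 : ∫ t : ℝ, gaussianPDFReal 0 1 t * t = 0 := by
  have := integral_gaussianReal_eq_integral_smul (μ := 0) (v := 1) (f := fun t : ℝ => t) one_ne_zero
  simpa using this.symm

lemma pdf_integral2 : ∫ t : ℝ, gaussianPDFReal 0 1 t * t ^ 2 = 1 := by
  have := integral_gaussianReal_eq_integral_smul (μ := 0) (v := 1)
    (f := fun t : ℝ => t ^ 2) one_ne_zero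
  have h2 := variance_fun_id_gaussianReal (μ := 0) (v := 1)
  rw [variance_eq_integral measurable_id'.aemeasurable] at h2
  simp at h2 this
  rw [← this, h2]

variable {n : ℕ}

lemma phi_pos (z : Fin n → ℝ) : 0 < stdPhi z :=
  Finset.prod_pos fun i _ => gaussianPDFReal_pos 0 1 _ one_ne_zero

lemma phi_0 : Integrable (stdPhi (n := n)) ∧ ∫ z : Fin n → ℝ, stdPhi z = 1 := by
  refine ⟨Integrable.fintype_prod (f := fun _ t => gaussianPDFReal 0 1 t) fun _ => pdf_int0, ?_⟩
  unfold stdPhi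
  rw [integral_fintype_prod_volume_eq_prod (fun _ t => gaussianPDFReal 0 1 t)]
  simp [pdf_integral0]

lemma phi_1 (i : Fin n) : Integrable (fun z : Fin n → ℝ => stdPhi z * z i) ∧
    ∫ z : Fin n → ℝ, stdPhi z * z i = 0 := by
  let p : Fin n → ℝ → ℝ := fun k t => gaussianPDFReal 0 1 t * (if k = i then t else 1)
  have hp : (fun z : Fin n → ℝ => stdPhi z * z i) = fun z => ∏ k, p k (z k) := by
    ext z; simp only [p, stdPhi, Finset.prod_mul_distrib]; simp
  rw [hp]
  refine ⟨Integrable.fintype_prod (f := p) fun k => ?_, ?_⟩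
  · by_cases h : k = i <;> simp [p, h, pdf_int0, pdf_int1]
  · rw [integral_fintype_prod_volume_eq_prod p]
    exact Finset.prod_eq_zero (Finset.mem_univ i) (by simp [p, pdf_integral1])

lemma phi_2 (i j : Fin n) : Integrable (fun z : Fin n → ℝ => stdPhi z * (z i * z j)) ∧
    ∫ z : Fin n → ℝ, stdPhi z * (z i * z j) = if i = j then 1 else 0 := by
  let p : Fin n → ℝ → ℝ := fun k t =>
    gaussianPDFReal 0 1 t * ((if k = i then t else 1) * (if k = j then t else 1))
  have hp : (fun z : Fin n → ℝ => stdPhi z * (z i * z j)) = fun z => ∏ k, p k (z k) := by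
    ext z; simp only [p, stdPhi, Finset.prod_mul_distrib]; simp
  rw [hp]
  refine ⟨Integrable.fintype_prod (f := p) fun k => ?_, ?_⟩
  · by_cases h : k = i <;> by_cases h' : k = j
    · simpa only [p, if_pos h, if_pos h', ← sq] using pdf_int2
    · simpa only [p, if_pos h, if_neg h', mul_one] using pdf_int1
    · simpa only [p, if_neg h, if_pos h', one_mul] using pdf_int1
    · simpa only [p, if_neg h, if_neg h', mul_one] using pdf_int0
  · rw [integral_fintype_prod_volume_eq_prod p]
    split_ifs with hij
    · subst hij
      apply Finset.prod_eq_one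
      intro k _
      by_cases h : k = i
      · simpa [p, h, sq] using pdf_integral2
      · simpa [p, h] using pdf_integral0
    · exact Finset.prod_eq_zero (Finset.mem_univ i) (by simp [p, hij, pdf_integral1])

lemma phi_affine_sq (m : ℝ) (a : Fin n → ℝ) :
    Integrable (fun z : Fin n → ℝ => stdPhi z * (m + ∑ i, a i * z i) ^ 2) ∧
    ∫ z : Fin n → ℝ, stdPhi z * (m + ∑ i, a i * z i) ^ 2 = m ^ 2 + ∑ i, a i ^ 2 := by
  have hp : (fun z : Fin n → ℝ => stdPhi z * (m + ∑ i, a i * z i) ^ 2) = fun z =>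
      m ^ 2 * stdPhi z + ∑ i, (2 * m * a i) * (stdPhi z * z i)
        + ∑ i, ∑ j, (a i * a j) * (stdPhi z * (z i * z j)) := by
    ext z
    have e1 : ∑ i, (2 * m * a i) * (stdPhi z * z i) = 2 * m * stdPhi z * ∑ i, a i * z i := by
      rw [Finset.mul_sum]; exact Finset.sum_congr rfl fun i _ => by ring
    have e2 : ∑ i, ∑ j, (a i * a j) * (stdPhi z * (z i * z j)) =
        stdPhi z * ((∑ i, a i * z i) * ∑ i, a i * z i) := by
      rw [Finset.sum_mul_sum, Finset.mul_sum]
      refine Finset.sum_congr rfl fun i _ => ?_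
      rw [Finset.mul_sum]
      exact Finset.sum_congr rfl fun i _ => by ring
    rw [e1, e2]; ring
  have i0 := (phi_0 (n := n)).1.const_mul (m ^ 2)
  have i1 : Integrable fun z : Fin n → ℝ => ∑ i, (2 * m * a i) * (stdPhi z * z i) :=
    integrable_finsetSum _ fun i _ => (phi_1 i).1.const_mul _
  have i2 : Integrable fun z : Fin n → ℝ => ∑ i, ∑ j, (a i * a j) * (stdPhi z * (z i * z j)) :=
    integrable_finsetSum _ fun i _ => integrable_finsetSum _ fun j _ => (phi_2 i j).1.const_mul _
  rw [hp]
  have i01 : Integrable fun z : Fin n → ℝ =>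
      m ^ 2 * stdPhi z + ∑ i, (2 * m * a i) * (stdPhi z * z i) := i0.add i1
  refine ⟨i01.add i2, ?_⟩
  rw [integral_add i01 i2, integral_add i0 i1, integral_const_mul,
    integral_finsetSum _ fun i _ => (phi_1 i).1.const_mul _,
    integral_finsetSum _ fun i _ => integrable_finsetSum _ fun j _ => (phi_2 i j).1.const_mul _]
  have : ∀ i, ∫ z : Fin n → ℝ, ∑ j, (a i * a j) * (stdPhi z * (z i * z j)) = a i ^ 2 := by
    intro i
    rw [integral_finsetSum _ fun j _ => (phi_2 i j).1.const_mul _]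
    simp [integral_const_mul, (phi_2 i _).2, sq]
  simp [this, integral_const_mul, (phi_1 _).2, phi_0.2]

lemma log_phi (z : Fin n → ℝ) :
    Real.log (stdPhi z) = -(n / 2 * Real.log (2 * π)) - 1 / 2 * ∑ i, z i ^ 2 := by
  unfold stdPhi
  rw [Real.log_prod (fun i _ => (gaussianPDFReal_pos 0 1 _ one_ne_zero).ne')]
  have : ∀ t : ℝ, Real.log (gaussianPDFReal 0 1 t) = -(1 / 2 * Real.log (2 * π)) - 1 / 2 * t ^ 2 := by
    intro t
    rw [gaussianPDFReal, Real.log_mul (by positivity) (by positivity), Real.log_exp, Real.log_inv,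
      Real.log_sqrt (by positivity)]
    simp; ring
  simp only [this, Finset.sum_sub_distrib, Finset.sum_const, Finset.mul_sum]
  simp; ring

lemma phi_normsq : Integrable (fun z : Fin n → ℝ => stdPhi z * ∑ i, z i ^ 2) ∧
    ∫ z : Fin n → ℝ, stdPhi z * ∑ i, z i ^ 2 = n := by
  have h : ∀ i, (fun z : Fin n → ℝ => stdPhi z * (z i ^ 2)) = fun z => stdPhi z * (z i * z i) := by
    intro i; ext z; ring
  simp only [Finset.mul_sum]
  refine ⟨integrable_finsetSum _ fun i _ => by rw [h]; exact (phi_2 i i).1, ?_⟩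
  rw [integral_finsetSum _ fun i _ => by rw [h]; exact (phi_2 i i).1]
  simp [h, (phi_2 _ _).2]

/-- Affine change of variables. -/
lemma affine_cov (F : (Fin n → ℝ) → ℝ) (hF : Integrable F) (m : Fin n → ℝ)
    (S : Matrix (Fin n) (Fin n) ℝ) (hS : S.det ≠ 0) :
    Integrable (fun z => |S.det| * F (m + S.mulVec z)) ∧
    ∫ z, |S.det| * F (m + S.mulVec z) = ∫ y, F y := by
  have hmap := Real.map_matrix_volume_pi_eq_smul_volume_pi hS
  have hG : Integrable (fun y => F (m + y)) := hF.comp_add_left m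
  have hG' : Integrable (fun y => F (m + y)) (Measure.map (Matrix.toLin' S) volume) := by
    rw [hmap]; exact hG.smul_measure (by simp)
  have hmeas : AEMeasurable (Matrix.toLin' S) (volume : Measure (Fin n → ℝ)) :=
    (LinearMap.continuous_of_finiteDimensional _).aemeasurable
  have e : ∀ z, F (m + S.mulVec z) = (fun y => F (m + y)) (Matrix.toLin' S z) := by
    intro z; simp
  simp only [e]
  refine ⟨(hG'.comp_aemeasurable hmeas).const_mul _, ?_⟩
  rw [integral_const_mul, ← integral_map hmeas hG'.aestronglyMeasurable, hmap, integral_smul_measure,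
    integral_add_left_eq_self F m]
  rw [ENNReal.toReal_ofReal (abs_nonneg _), abs_inv, smul_eq_mul, ← mul_assoc,
    mul_inv_cancel₀ (abs_ne_zero.2 hS), one_mul]

lemma exists_factor (R : Matrix (Fin n) (Fin n) ℝ) (hR : R.PosDef) :
    ∃ S : Matrix (Fin n) (Fin n) ℝ, S * S.transpose = R := by
  open scoped MatrixOrder Matrix.Norms.L2Operator in
  obtain ⟨y, hy⟩ := CStarAlgebra.nonneg_iff_eq_star_mul_self.mp hR.posSemidef.nonneg
  refine ⟨y.transpose, ?_⟩
  rw [hy]; simp [Matrix.star_eq_conjTranspose]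

/-- Growth of the log-density. -/
lemma log_growth (f : EuclideanSpace ℝ (Fin n) → ℝ) (c₁ c₂ : ℝ) (hc₁ : 0 < c₁)
    (hreg : IsRegularDensity c₁ c₂ f) (x : EuclideanSpace ℝ (Fin n)) :
    |Real.log (f x) - Real.log (f 0)| ≤ c₁ * ‖x‖ ^ 2 + c₂ * ‖x‖ := by
  obtain ⟨hpos, hd, hg⟩ := hreg
  have := (convex_closedBall (0 : EuclideanSpace ℝ (Fin n)) ‖x‖).norm_image_sub_le_of_norm_fderiv_le
    (𝕜 := ℝ) (f := fun y => Real.log (f y)) (C := c₁ * ‖x‖ + c₂) (x := 0) (y := x)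
    (fun y _ => (hd y).log (hpos y).ne') (fun y hy => ?_) (by simp) (by simp)
  · simp only [Real.norm_eq_abs, sub_zero] at this
    calc _ ≤ _ := this
      _ = _ := by ring
  · have h := hg y
    rw [gradient, LinearIsometryEquiv.norm_map] at h
    have : ‖y‖ ≤ ‖x‖ := by simpa using hy
    nlinarith

end helpers

section moments

variable {n : ℕ} (f : EuclideanSpace ℝ (Fin n) → ℝ)

lemma mom_sq (hdens : IsDensity f)
    (hmom : Integrable fun x : EuclideanSpace ℝ (Fin n) => f x * ‖x‖ ^ 2) (i : Fin n) :
    Integrable fun x : EuclideanSpace ℝ (Fin n) => f x * x i ^ 2 := by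
  refine hmom.mono' (hdens.2.1.aestronglyMeasurable.mul
    (by fun_prop : Continuous fun x : EuclideanSpace ℝ (Fin n) => x i ^ 2).aestronglyMeasurable)
    (Filter.Eventually.of_forall fun x => ?_)
  rw [norm_mul, Real.norm_of_nonneg (hdens.1 x), Real.norm_of_nonneg (sq_nonneg _)]
  refine mul_le_mul_of_nonneg_left ?_ (hdens.1 x)
  rw [EuclideanSpace.real_norm_sq_eq]
  exact Finset.single_le_sum (f := fun i => x i ^ 2) (fun i _ => sq_nonneg _) (Finset.mem_univ i)

lemma mom_one (hdens : IsDensity f)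
    (hmom : Integrable fun x : EuclideanSpace ℝ (Fin n) => f x * ‖x‖ ^ 2) (i : Fin n) :
    Integrable fun x : EuclideanSpace ℝ (Fin n) => f x * x i :=
  weighted_integrable_of_sq _ f (fun x => x i) hdens.1 hdens.2.1
    (by fun_prop : Continuous fun x : EuclideanSpace ℝ (Fin n) => x i).aestronglyMeasurable
    (mom_sq f hdens hmom i)

lemma mom_csq (hdens : IsDensity f)
    (hmom : Integrable fun x : EuclideanSpace ℝ (Fin n) => f x * ‖x‖ ^ 2) (i : Fin n) (a : ℝ) :
    Integrable (fun x : EuclideanSpace ℝ (Fin n) => f x * (x i - a) ^ 2) ∧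
    ∫ x : EuclideanSpace ℝ (Fin n), f x * (x i - a) ^ 2 =
      (∫ x : EuclideanSpace ℝ (Fin n), f x * x i ^ 2) - 2 * a * meanVec f i + a ^ 2 := by
  have e : (fun x : EuclideanSpace ℝ (Fin n) => f x * (x i - a) ^ 2) =
      fun x => f x * x i ^ 2 - 2 * a * (f x * x i) + a ^ 2 * f x := by ext x; ring
  have h2 := mom_sq f hdens hmom i
  have h1 := (mom_one f hdens hmom i).const_mul (2 * a)
  have h0 := hdens.2.1.const_mul (a ^ 2)
  have h3 : Integrable (fun x : EuclideanSpace ℝ (Fin n) => f x * x i ^ 2 - 2 * a * (f x * x i)) :=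
    h2.sub h1
  rw [e]
  refine ⟨h3.add h0, ?_⟩
  rw [integral_add h3 h0, integral_sub h2 h1, integral_const_mul, integral_const_mul, hdens.2.2,
    meanVec, mul_one]

lemma mom_cov (hdens : IsDensity f)
    (hmom : Integrable fun x : EuclideanSpace ℝ (Fin n) => f x * ‖x‖ ^ 2) (i j : Fin n) (a b : ℝ) :
    Integrable (fun x : EuclideanSpace ℝ (Fin n) => f x * (x i - a) * (x j - b)) := by
  refine ((mom_csq f hdens hmom i a).1.add (mom_csq f hdens hmom j b).1).mono'
    ((hdens.2.1.aestronglyMeasurable.mul (by fun_prop :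
      Continuous fun x : EuclideanSpace ℝ (Fin n) => x i - a).aestronglyMeasurable).mul
      (by fun_prop : Continuous fun x : EuclideanSpace ℝ (Fin n) => x j - b).aestronglyMeasurable)
    (Filter.Eventually.of_forall fun x => ?_)
  rw [mul_assoc, norm_mul, Real.norm_of_nonneg (hdens.1 x), Pi.add_apply, ← mul_add]
  refine mul_le_mul_of_nonneg_left ?_ (hdens.1 x)
  rw [Real.norm_eq_abs]
  exact abs_le.2 ⟨by nlinarith [sq_nonneg (x i - a + (x j - b))],
    by nlinarith [sq_nonneg (x i - a - (x j - b))]⟩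

/-- The second moment in terms of mean and covariance. -/
lemma mom_trace (hdens : IsDensity f)
    (hmom : Integrable fun x : EuclideanSpace ℝ (Fin n) => f x * ‖x‖ ^ 2) :
    ∫ x : EuclideanSpace ℝ (Fin n), f x * ‖x‖ ^ 2 = ∑ i, (meanVec f i ^ 2 + covMat f i i) := by
  simp only [EuclideanSpace.real_norm_sq_eq, Finset.mul_sum]
  rw [integral_finsetSum _ fun i _ => mom_sq f hdens hmom i]
  refine Finset.sum_congr rfl fun i _ => ?_
  have h := (mom_csq f hdens hmom i (meanVec f i)).2
  have e : covMat f i i = ∫ x : EuclideanSpace ℝ (Fin n), f x * (x i - meanVec f i) ^ 2 := by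
    simp only [covMat, Matrix.of_apply, sq, mul_assoc]
  rw [e, h]; ring

lemma cov_quad (hdens : IsDensity f)
    (hmom : Integrable fun x : EuclideanSpace ℝ (Fin n) => f x * ‖x‖ ^ 2)
    (Q : Matrix (Fin n) (Fin n) ℝ) :
    Integrable (fun x : EuclideanSpace ℝ (Fin n) =>
      f x * ∑ i, ∑ j, (x i - meanVec f i) * Q i j * (x j - meanVec f j)) ∧
    ∫ x : EuclideanSpace ℝ (Fin n),
      f x * ∑ i, ∑ j, (x i - meanVec f i) * Q i j * (x j - meanVec f j) =
      ∑ i, ∑ j, Q i j * covMat f i j := by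
  have e : (fun x : EuclideanSpace ℝ (Fin n) =>
      f x * ∑ i, ∑ j, (x i - meanVec f i) * Q i j * (x j - meanVec f j)) = fun x =>
      ∑ i, ∑ j, Q i j * (f x * (x i - meanVec f i) * (x j - meanVec f j)) := by
    ext x
    simp only [Finset.mul_sum]
    exact Finset.sum_congr rfl fun i _ => Finset.sum_congr rfl fun j _ => by ring
  have h := fun i j => (mom_cov f hdens hmom i j (meanVec f i) (meanVec f j)).const_mul (Q i j)
  rw [e]
  refine ⟨integrable_finsetSum _ fun i _ => integrable_finsetSum _ fun j _ => h i j, ?_⟩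
  rw [integral_finsetSum _ fun i _ => integrable_finsetSum _ fun j _ => h i j]
  refine Finset.sum_congr rfl fun i _ => ?_
  rw [integral_finsetSum _ fun j _ => h i j]
  refine Finset.sum_congr rfl fun j _ => ?_
  rw [integral_const_mul, covMat, Matrix.of_apply]

lemma cov_symm (i j : Fin n) : covMat f i j = covMat f j i := by
  simp only [covMat, Matrix.of_apply]
  congr 1; ext x; ring

lemma cov_posDef (hdens : IsDensity f) (hpos : ∀ x, 0 < f x) (hcont : Continuous f)
    (hmom : Integrable fun x : EuclideanSpace ℝ (Fin n) => f x * ‖x‖ ^ 2) :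
    (covMat f).PosDef := by
  refine Matrix.PosDef.of_dotProduct_mulVec_pos ?_ ?_
  · ext i j; simp [Matrix.conjTranspose_apply, cov_symm f j i]
  · intro v hv
    obtain ⟨hI, hE⟩ := cov_quad f hdens hmom (Matrix.of fun i j => v i * v j)
    have e1 : star v ⬝ᵥ (covMat f).mulVec v =
        ∑ i, ∑ j, (Matrix.of fun i j => v i * v j) i j * covMat f i j := by
      simp only [dotProduct, Matrix.mulVec, Finset.mul_sum, Matrix.of_apply]
      refine Finset.sum_congr rfl fun i _ => Finset.sum_congr rfl fun j _ => ?_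
      simp; ring
    have e2 : (fun x : EuclideanSpace ℝ (Fin n) => f x * ∑ i, ∑ j, (x i - meanVec f i) *
        (Matrix.of fun i j => v i * v j) i j * (x j - meanVec f j)) =
        fun x => f x * (∑ i, v i * (x i - meanVec f i)) ^ 2 := by
      ext x
      rw [sq, Finset.sum_mul_sum]
      congr 1
      refine Finset.sum_congr rfl fun i _ => Finset.sum_congr rfl fun j _ => ?_
      simp; ring
    rw [e1, ← hE]
    rw [e2] at hI ⊢
    have hnn : 0 ≤ fun x : EuclideanSpace ℝ (Fin n) => f x * (∑ i, v i * (x i - meanVec f i)) ^ 2 :=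
      fun x => mul_nonneg (hdens.1 x) (sq_nonneg _)
    refine lt_of_le_of_ne (integral_nonneg hnn) fun h0 => hv ?_
    have hz := (integral_eq_zero_iff_of_nonneg hnn hI).1 h0.symm
    have hz' := (Continuous.ae_eq_iff_eq (volume : Measure (EuclideanSpace ℝ (Fin n)))
      (by fun_prop) continuous_zero).1 hz
    ext k
    have hx : ∀ x : EuclideanSpace ℝ (Fin n), ∑ i, v i * (x i - meanVec f i) = 0 := by
      intro x
      have := congrFun hz' x
      simpa [(hpos x).ne'] using this
    have ha := hx (WithLp.toLp 2 (meanVec f + Pi.single k 1))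
    simpa [Pi.single_apply] using ha

end moments

section mainparts

variable {n : ℕ} (f : EuclideanSpace ℝ (Fin n) → ℝ)

/-- Weighted bounds for the log-density under a probability weight with second moment `M`. -/
lemma weighted_log_bound {α : Type*} [MeasurableSpace α] (μ : Measure α) (w : α → ℝ)
    (T : α → EuclideanSpace ℝ (Fin n)) (L : EuclideanSpace ℝ (Fin n) → ℝ) (c₁ c₂ : ℝ)
    (hc₂ : 0 ≤ c₂)
    (hL : ∀ x, |L x - L 0| ≤ c₁ * ‖x‖ ^ 2 + c₂ * ‖x‖)
    (hw : ∀ x, 0 ≤ w x) (h0 : Integrable w μ) (h0' : ∫ x, w x ∂μ = 1)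
    (hT : AEStronglyMeasurable (fun x => ‖T x‖) μ)
    (hLT : AEStronglyMeasurable (fun x => L (T x)) μ)
    (h2 : Integrable (fun x => w x * ‖T x‖ ^ 2) μ) :
    Integrable (fun x => w x * L (T x)) μ ∧
    |(∫ x, w x * L (T x) ∂μ) - L 0| ≤
      c₁ * (∫ x, w x * ‖T x‖ ^ 2 ∂μ) + c₂ * √(∫ x, w x * ‖T x‖ ^ 2 ∂μ) := by
  have h1 := weighted_integrable_of_sq μ w (fun x => ‖T x‖) hw h0 hT h2
  have hb : Integrable (fun x => c₁ * (w x * ‖T x‖ ^ 2) + c₂ * (w x * ‖T x‖)) μ :=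
    (h2.const_mul _).add (h1.const_mul _)
  have hpt : ∀ x, ‖w x * (L (T x) - L 0)‖ ≤ c₁ * (w x * ‖T x‖ ^ 2) + c₂ * (w x * ‖T x‖) := by
    intro x
    rw [norm_mul, Real.norm_of_nonneg (hw x), Real.norm_eq_abs]
    have := mul_le_mul_of_nonneg_left (hL (T x)) (hw x)
    linarith
  have hd : Integrable (fun x => w x * (L (T x) - L 0)) μ :=
    hb.mono' (h0.aestronglyMeasurable.mul (hLT.sub aestronglyMeasurable_const))
      (Filter.Eventually.of_forall hpt)
  have e : (fun x => w x * L (T x)) = fun x => w x * (L (T x) - L 0) + L 0 * w x := by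
    ext x; ring
  have hi : Integrable (fun x => w x * L (T x)) μ := by
    rw [e]; exact hd.add (h0.const_mul _)
  refine ⟨hi, ?_⟩
  have e' : (∫ x, w x * L (T x) ∂μ) - L 0 = ∫ x, w x * (L (T x) - L 0) ∂μ := by
    rw [e, integral_add hd (h0.const_mul _), integral_const_mul, h0']; ring
  rw [e']
  have hn := norm_integral_le_of_norm_le hb (Filter.Eventually.of_forall hpt)
  rw [integral_add (h2.const_mul _) (h1.const_mul _), integral_const_mul, integral_const_mul,
    Real.norm_eq_abs] at hn
  have := weighted_mean_le_sqrt μ w (fun x => ‖T x‖) hw h0 h0' h1 h2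
  nlinarith

lemma kl_formula (hdens : IsDensity f) (hpos : ∀ x, 0 < f x) (hR : (covMat f).PosDef)
    (hmom : Integrable fun x : EuclideanSpace ℝ (Fin n) => f x * ‖x‖ ^ 2)
    (hfL : Integrable fun x => f x * Real.log (f x)) :
    klDiv' f (gaussDensity (meanVec f) (covMat f)) =
      (∫ x, f x * Real.log (f x)) + n / 2 * Real.log (2 * π)
        + 1 / 2 * Real.log (covMat f).det + n / 2 := by
  obtain ⟨hI, hE⟩ := cov_quad f hdens hmom (covMat f)⁻¹
  have hdet := hR.det_pos
  have htr : ∑ i, ∑ j, (covMat f)⁻¹ i j * covMat f i j = n := by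
    have h1 : (covMat f)⁻¹ * covMat f = 1 :=
      Matrix.nonsing_inv_mul _ (isUnit_iff_ne_zero.2 hdet.ne')
    have h2 := congrArg Matrix.trace h1
    simp only [Matrix.trace, Matrix.diag_apply, Matrix.mul_apply, Matrix.one_apply_eq] at h2
    refine (Finset.sum_congr rfl fun i _ => Finset.sum_congr rfl fun j _ => by
      rw [cov_symm f i j]).trans (h2.trans ?_)
    simp
  rw [htr] at hE
  have e : (fun x => f x * Real.log (f x / gaussDensity (meanVec f) (covMat f) x)) = fun x =>
      f x * Real.log (f x) + (n / 2 * Real.log (2 * π) + 1 / 2 * Real.log (covMat f).det) * f x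
      + 1 / 2 * (f x * ∑ i, ∑ j, (x i - meanVec f i) * (covMat f)⁻¹ i j * (x j - meanVec f j)) := by
    ext x
    have hg : Real.log (gaussDensity (meanVec f) (covMat f) x) =
        -(n / 2 * Real.log (2 * π)) - 1 / 2 * Real.log (covMat f).det -
        1 / 2 * ∑ i, ∑ j, (x i - meanVec f i) * (covMat f)⁻¹ i j * (x j - meanVec f j) := by
      rw [gaussDensity, Real.log_mul (by positivity) (by positivity),
        Real.log_mul (by positivity) (by positivity), Real.log_exp,
        Real.log_rpow (by positivity), Real.log_rpow hdet]
      ring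
    have hgne : gaussDensity (meanVec f) (covMat f) x ≠ 0 := by
      unfold gaussDensity; positivity
    rw [Real.log_div (hpos x).ne' hgne, hg]
    ring
  have i1 := hdens.2.1.const_mul (n / 2 * Real.log (2 * π) + 1 / 2 * Real.log (covMat f).det)
  have i01 : Integrable fun x => f x * Real.log (f x) +
    (n / 2 * Real.log (2 * π) + 1 / 2 * Real.log (covMat f).det) * f x := hfL.add i1
  rw [klDiv', e, integral_add i01 (hI.const_mul _), integral_add hfL i1, integral_const_mul,
    integral_const_mul, hE, hdens.2.2]
  ring

/-- Gibbs inequality against the Gaussian, in whitened coordinates. -/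
lemma gibbs (hdens : IsDensity f) (hpos : ∀ x, 0 < f x) (m : Fin n → ℝ)
    (S : Matrix (Fin n) (Fin n) ℝ) (hS : S.det ≠ 0)
    (hL : Integrable fun z : Fin n → ℝ =>
      stdPhi z * Real.log (f (WithLp.toLp 2 (m + S.mulVec z)))) :
    (∫ z : Fin n → ℝ, stdPhi z * Real.log (f (WithLp.toLp 2 (m + S.mulVec z))))
      + Real.log |S.det| + n / 2 * Real.log (2 * π) + n / 2 ≤ 0 := by
  have hmp := PiLp.volume_preserving_toLp (Fin n)
  have hemb : MeasurableEmbedding (@WithLp.toLp 2 (Fin n → ℝ)) :=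
    (MeasurableEquiv.toLp 2 (Fin n → ℝ)).measurableEmbedding
  have hF : Integrable (fun y : Fin n → ℝ => f (WithLp.toLp 2 y)) :=
    (hmp.integrable_comp_emb hemb).2 hdens.2.1
  have hF1 : ∫ y : Fin n → ℝ, f (WithLp.toLp 2 y) = 1 := by
    rw [hmp.integral_comp hemb, hdens.2.2]
  obtain ⟨hc, hc1⟩ := affine_cov _ hF m S hS
  rw [hF1] at hc1
  obtain ⟨p0, p0'⟩ := phi_0 (n := n)
  obtain ⟨p2, p2'⟩ := phi_normsq (n := n)
  set C := Real.log |S.det| + n / 2 * Real.log (2 * π) with hC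
  have i01 : Integrable fun z : Fin n → ℝ =>
      stdPhi z * Real.log (f (WithLp.toLp 2 (m + S.mulVec z))) + C * stdPhi z :=
    hL.add (p0.const_mul _)
  have i012 : Integrable fun z : Fin n → ℝ =>
      stdPhi z * Real.log (f (WithLp.toLp 2 (m + S.mulVec z))) + C * stdPhi z
        + 1 / 2 * (stdPhi z * ∑ i, z i ^ 2) := i01.add (p2.const_mul _)
  have key : ∫ z : Fin n → ℝ, (stdPhi z * Real.log (f (WithLp.toLp 2 (m + S.mulVec z)))
        + C * stdPhi z + 1 / 2 * (stdPhi z * ∑ i, z i ^ 2)) ≤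
      ∫ z : Fin n → ℝ, (|S.det| * f (WithLp.toLp 2 (m + S.mulVec z)) - stdPhi z) := by
    refine integral_mono i012 (hc.sub p0) fun z => ?_
    have hp := phi_pos z
    have hd : 0 < |S.det| := abs_pos.2 hS
    have hf := hpos (WithLp.toLp 2 (m + S.mulVec z))
    have h := Real.log_le_sub_one_of_pos (div_pos (mul_pos hd hf) hp)
    rw [Real.log_div (mul_pos hd hf).ne' hp.ne', Real.log_mul hd.ne' hf.ne', log_phi] at h
    have h' := mul_le_mul_of_nonneg_left h hp.le
    have h3 : ∀ A : ℝ, stdPhi z * (A / stdPhi z - 1) = A - stdPhi z := by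
      intro A; field_simp
    rw [h3] at h'
    simp only [hC]
    linarith
  rw [integral_add i01 (p2.const_mul _), integral_add hL (p0.const_mul _), integral_sub hc p0,
    integral_const_mul, integral_const_mul, p0', p2', hc1] at key
  linarith

end mainparts

noncomputable section
open MeasureTheory Real ProbabilityTheory

theorem stmt3 {n : ℕ} (f : EuclideanSpace ℝ (Fin n) → ℝ) (hdens : IsDensity f)
    (hmom : Integrable fun x : EuclideanSpace ℝ (Fin n) => f x * ‖x‖ ^ 2)
    (c₁ c₂ : ℝ) (hc₁ : 0 < c₁) (hc₂ : 0 ≤ c₂) (hreg : IsRegularDensity c₁ c₂ f) :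
    klDiv' f (gaussDensity (meanVec f) (covMat f)) ≤
      (c₁ * Real.sqrt (∫ x, f x * ‖x‖ ^ 2) + c₂) * (2 * Real.sqrt (∫ x, f x * ‖x‖ ^ 2)) := by
  obtain ⟨hpos, hd, hg⟩ := id hreg
  have hcont : Continuous f := hd.continuous
  have hLc : Continuous fun x => Real.log (f x) := hcont.log fun x => (hpos x).ne'
  have hgrow := log_growth f c₁ c₂ hc₁ hreg
  have hR := cov_posDef f hdens hpos hcont hmom
  obtain ⟨hfL, hA⟩ := weighted_log_bound volume f (fun x => x) (fun x => Real.log (f x)) c₁ c₂ hc₂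
    hgrow hdens.1 hdens.2.1 hdens.2.2 continuous_norm.aestronglyMeasurable
    hLc.aestronglyMeasurable hmom
  obtain ⟨S, hSR⟩ := exists_factor _ hR
  have hdet : S.det * S.det = (covMat f).det := by
    rw [← hSR, Matrix.det_mul, Matrix.det_transpose]
  have hS : S.det ≠ 0 := by
    intro h
    have := hR.det_pos
    rw [← hdet, h] at this
    simp at this
  have hlog : Real.log |S.det| = 1 / 2 * Real.log (covMat f).det := by
    rw [← hdet, Real.log_mul hS hS, Real.log_abs]; ring
  have hTc : Continuous fun z : Fin n → ℝ =>
      (WithLp.toLp 2 (meanVec f + S.mulVec z) : EuclideanSpace ℝ (Fin n)) := by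
    refine (PiLp.continuous_toLp 2 _).comp (continuous_const.add ?_)
    exact Continuous.matrix_mulVec continuous_const continuous_id
  have hn2 : ∀ z : Fin n → ℝ, stdPhi z *
      ‖(WithLp.toLp 2 (meanVec f + S.mulVec z) : EuclideanSpace ℝ (Fin n))‖ ^ 2 =
      ∑ k, stdPhi z * (meanVec f k + ∑ i, S k i * z i) ^ 2 := by
    intro z
    rw [EuclideanSpace.real_norm_sq_eq, Finset.mul_sum]
    rfl
  have hT2 : Integrable fun z : Fin n → ℝ => stdPhi z *
      ‖(WithLp.toLp 2 (meanVec f + S.mulVec z) : EuclideanSpace ℝ (Fin n))‖ ^ 2 := by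
    simp only [hn2]
    exact integrable_finsetSum _ fun k _ => (phi_affine_sq _ _).1
  have hT2' : ∫ z : Fin n → ℝ, stdPhi z *
      ‖(WithLp.toLp 2 (meanVec f + S.mulVec z) : EuclideanSpace ℝ (Fin n))‖ ^ 2 =
      ∫ x, f x * ‖x‖ ^ 2 := by
    simp only [hn2]
    rw [integral_finsetSum _ fun k _ => (phi_affine_sq (meanVec f k) (fun i => S k i)).1, mom_trace f hdens hmom]
    refine Finset.sum_congr rfl fun k _ => ?_
    rw [(phi_affine_sq (meanVec f k) (fun i => S k i)).2, ← hSR, Matrix.mul_apply]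
    simp [sq]
  obtain ⟨hgL, hB⟩ := weighted_log_bound volume (stdPhi (n := n))
    (fun z => WithLp.toLp 2 (meanVec f + S.mulVec z)) (fun x => Real.log (f x)) c₁ c₂ hc₂
    hgrow (fun z => (phi_pos z).le) phi_0.1 phi_0.2 hTc.norm.aestronglyMeasurable
    (hLc.comp hTc).aestronglyMeasurable hT2
  have hG := gibbs f hdens hpos (meanVec f) S hS hgL
  rw [hT2'] at hB
  rw [kl_formula f hdens hpos hR hmom hfL]
  have hM : 0 ≤ ∫ x, f x * ‖x‖ ^ 2 :=
    integral_nonneg fun x => mul_nonneg (hdens.1 x) (sq_nonneg _)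
  have hs := Real.mul_self_sqrt hM
  have h1 := (abs_le.1 hA).2
  have h2 := (abs_le.1 hB).1
  rw [hlog] at hG
  have hr : (c₁ * √(∫ x, f x * ‖x‖ ^ 2) + c₂) * (2 * √(∫ x, f x * ‖x‖ ^ 2)) =
      2 * (c₁ * (∫ x, f x * ‖x‖ ^ 2) + c₂ * √(∫ x, f x * ‖x‖ ^ 2)) := by
    calc _ = 2 * (c₁ * (√(∫ x, f x * ‖x‖ ^ 2) * √(∫ x, f x * ‖x‖ ^ 2)) +
          c₂ * √(∫ x, f x * ‖x‖ ^ 2)) := by ring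
      _ = _ := by rw [hs]
  rw [hr]
  linarith

end
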